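/- For every cardinal number α ≥ 𝔠 and every index set Q with |Q| = α, there exists a family {(D_q, E_q) : q ∈ Q} of pairs of metrizable topological spaces, each of cardinality α, such that for every q ∈ Q: D_q is homeomorphic to a closed subset of E_q, E_q is homeomorphic to a closed subset of D_q, but D_q is homeomorphic to no clopen subset of E_q and E_q is homeomorphic to no clopen subset of D_q; and moreover, whenever q ≠ q', there exists no injective continuous map from any of the spaces D_q, E_q into any of the spaces D_{q'}, E_{q'}. -/

import Mathlib

universe u

open Cardinal

/-- `A` is homeomorphic to a clopen subset of `B`. -/
def HomeoToClopenSubset (A : Type*) [TopologicalSpace A]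
    (B : Type*) [TopologicalSpace B] : Prop :=
  ∃ t : Set B, IsClopen t ∧ Nonempty (A ≃ₜ t)

/-- `A` is homeomorphic to a closed subset of `B`. -/
def HomeoToClosedSubset (A : Type*) [TopologicalSpace A]
    (B : Type*) [TopologicalSpace B] : Prop :=
  ∃ t : Set B, IsClosed t ∧ Nonempty (A ≃ₜ t)

/-- There exists no injective continuous map from `A` into `B`. -/
def NoInjCont (A : Type*) [TopologicalSpace A]
    (B : Type*) [TopologicalSpace B] : Prop :=
  ¬ ∃ f : A → B, Continuous f ∧ Function.Injective f

/-- The conditions on a single pair `(D, E)`: both metrizable of cardinality `α`,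
each is homeomorphic to a closed subset of the other, but neither is homeomorphic
to a clopen subset of the other. -/
def Stmt9Pair (α : Cardinal.{u}) (D E : Type u)
    [TopologicalSpace D] [TopologicalSpace E] : Prop :=
  TopologicalSpace.MetrizableSpace D ∧ TopologicalSpace.MetrizableSpace E ∧
  #D = α ∧ #E = α ∧
  HomeoToClosedSubset D E ∧ HomeoToClosedSubset E D ∧
  ¬ HomeoToClopenSubset D E ∧ ¬ HomeoToClopenSubset E D

/-!
Both members of a pair are obtained from a space `X` by adding zero-dimensional summands:
`D = X ⊕ (H ⊕ 1)` and `E = X ⊕ (H ⊕ C)`, where `C` is the Cantor space and `H = (C × ℕ) × ℚ`.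
Shifting `ℕ` makes room in `H` for a closed copy of `1` or of `C`, so each of `D`, `E` is a closed
subspace of the other. If no nonempty clopen subset of `X` is totally disconnected, then a clopen
copy of the compact space `1` (or `C`) in `E` (or `D`) cannot meet `X`, nor can it meet `H`, whose
compact subsets have empty interior. So `1` would be open in `C`, or `C` would embed in `1`.

The spaces `X_q` are made as rigid as their combinatorial blueprints. A transfinite construction of
Bernstein type gives a plane set `B` such that removing countably many points does not disconnect
it and the only continuous injections of its relatively open subsets into `B` are inclusions. Given
a relation `ρ` consisting of sequences in a set `V`, glue one copy of `B ∪ ℕ` for each `s ∈ ρ` to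
the discrete set `V`, identifying `n` with `s n`. A continuous injection between such
spaces takes each copy of `B ∪ ℕ` identically to another copy, hence induces an injection of
vertices respecting the relations. On a well-order with a greatest element there are relations
indexed by the points `q` of the order which encode the order, a ladder to each limit of
cofinality `ω`, and the point `q`; an injection respecting two of them is the identity, so the two
points agree.
-/

open Set Topology Function

/-! ### A rigid relation on a well-order -/

section Ladder

variable {V : Type*} [LinearOrder V]

/-- `l` is the supremum of a strictly increasing sequence, i.e. a limit of cofinality `ω`. -/
def IsOmegaLimit (l : V) : Prop := ∃ c : ℕ → V, StrictMono c ∧ IsLUB (range c) l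

open Classical in
/-- A chosen strictly increasing sequence with supremum `l`; constant (junk) if there is none. -/
noncomputable def ladder (l : V) : ℕ → V :=
  if h : IsOmegaLimit l then h.choose else fun _ => l

variable {l q q' : V} {F : V → V} {s : ℕ → V}

theorem IsOmegaLimit.strictMono_ladder (h : IsOmegaLimit l) : StrictMono (ladder l) := by
  rw [ladder, dif_pos h]
  exact h.choose_spec.1

theorem IsOmegaLimit.isLUB_ladder (h : IsOmegaLimit l) : IsLUB (range (ladder l)) l := by
  rw [ladder, dif_pos h]
  exact h.choose_spec.2

theorem IsOmegaLimit.ladder_lt (h : IsOmegaLimit l) (n : ℕ) : ladder l n < l :=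
  (h.strictMono_ladder n.lt_succ_self).trans_le (h.isLUB_ladder.1 (mem_range_self _))

/-- `F` maps limits of cofinality `ω` to such limits, and their ladders to the ladders of the
images. -/
def PreservesLadders (F : V → V) : Prop :=
  ∀ ⦃l⦄, IsOmegaLimit l → IsOmegaLimit (F l) ∧ ∀ n, F (ladder l n) = ladder (F l) n

theorem PreservesLadders.map_eq_of_isLUB_iterate [WellFoundedLT V] (hF : PreservesLadders F)
    (hmono : StrictMono F) {b : V} (hb : b < F b) (hl : IsLUB (range fun n => F^[n] b) l) :
    F l = l := by
  have hlim : IsOmegaLimit l := ⟨_, hmono.strictMono_iterate_of_lt_map hb, hl⟩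
  obtain ⟨hlim', hlad⟩ := hF hlim
  refine (hlim'.isLUB_ladder.2 ?_).antisymm hmono.le_apply
  rintro _ ⟨n, rfl⟩
  obtain ⟨_, ⟨m, rfl⟩, hm⟩ := (lt_isLUB_iff hl).1 (hlim.ladder_lt n)
  calc ladder (F l) n = F (ladder l n) := (hlad n).symm
    _ ≤ F (F^[m] b) := hmono.monotone hm.le
    _ = F^[m + 1] b := (iterate_succ_apply' F m b).symm
    _ ≤ l := hl.1 ⟨m + 1, rfl⟩

-- If `b` moved, the supremum of its iterates would be fixed together with its whole ladder, and
-- a fixed rung above `b` would bound all the iterates.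
theorem PreservesLadders.eq_id [WellFoundedLT V] [OrderTop V] (hF : PreservesLadders F)
    (hmono : StrictMono F) : F = id := by
  by_contra hne
  obtain ⟨b, hne⟩ := ne_iff.1 hne
  have hb : b < F b := hmono.le_apply.lt_of_ne' hne
  obtain ⟨l, hl⟩ : ∃ l, IsLUB (range fun n => F^[n] b) l := by
    obtain ⟨l, hl, hmin⟩ := wellFounded_lt.has_min (upperBounds (range fun n => F^[n] b))
      ⟨⊤, fun _ _ => le_top⟩
    exact ⟨l, hl, fun x hx => not_lt.1 (hmin x hx)⟩
  have hlim : IsOmegaLimit l := ⟨_, hmono.strictMono_iterate_of_lt_map hb, hl⟩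
  have hfix (n : ℕ) : F (ladder l n) = ladder l n := by
    rw [(hF hlim).2, hF.map_eq_of_isLUB_iterate hmono hb hl]
  obtain ⟨_, ⟨m, rfl⟩, hm⟩ := (lt_isLUB_iff hlim.isLUB_ladder).1 (hb.trans_le (hl.1 ⟨1, rfl⟩))
  have hbound (k : ℕ) : F^[k] b ≤ ladder l m :=
    calc F^[k] b ≤ F^[k] (ladder l m) := hmono.monotone.iterate k hm.le
      _ = ladder l m := iterate_fixed (hfix m) k
  exact (hlim.ladder_lt m).not_ge (hl.2 (forall_mem_range.2 hbound))

/-- The `ω`-ary relation consisting of the sequences `(a, b, b, …)` with `a < b`, the ladders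
`(l, ladder l 0, ladder l 1, …)`, and the constant sequence `(q, q, …)`. The first two kinds
encode the order and the ladders, the third one marks the point `q`. -/
def ladderRel (q : V) : Set (ℕ → V) :=
  {s | (s 0 < s 1 ∧ ∀ n, s (n + 1) = s 1) ∨
    (IsOmegaLimit (s 0) ∧ ∀ n, s (n + 1) = ladder (s 0) n) ∨ ∀ n, s n = q}

theorem apply_one_lt_apply_two (hl : IsOmegaLimit (s 0)) (hs : ∀ n, s (n + 1) = ladder (s 0) n) :
    s 1 < s 2 := by
  rw [hs 0, hs 1]
  exact hl.strictMono_ladder one_pos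

theorem eq_of_mem_ladderRel_of_apply_zero_eq (hs : s ∈ ladderRel q) (h : s 0 = s 1) (n : ℕ) :
    s n = q := by
  rcases hs with ⟨hlt, -⟩ | ⟨hl, hlad⟩ | hs
  · exact absurd h hlt.ne
  · exact absurd ((hlad 0).symm.trans h.symm) (hl.ladder_lt 0).ne
  · exact hs n

theorem lt_of_mem_ladderRel (hs : s ∈ ladderRel q) (h₀ : s 0 ≠ s 1) (h₁ : s 1 = s 2) :
    s 0 < s 1 ∧ ∀ n, s (n + 1) = s 1 := by
  rcases hs with hs | ⟨hl, hlad⟩ | hs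
  · exact hs
  · exact absurd h₁ (apply_one_lt_apply_two hl hlad).ne
  · exact absurd ((hs 0).trans (hs 1).symm) h₀

theorem isOmegaLimit_of_mem_ladderRel (hs : s ∈ ladderRel q) (h : s 1 ≠ s 2) :
    IsOmegaLimit (s 0) ∧ ∀ n, s (n + 1) = ladder (s 0) n := by
  rcases hs with ⟨-, hs⟩ | hs | hs
  · exact absurd (hs 1).symm h
  · exact hs
  · exact absurd ((hs 1).trans (hs 2).symm) h

theorem exists_mem_ladderRel_of_lt (q : V) {a b : V} (hab : a < b) :
    ∃ s ∈ ladderRel q, s 0 = a ∧ ∀ n, s (n + 1) = b :=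
  ⟨fun n => n.casesOn a fun _ => b, .inl ⟨hab, fun _ => rfl⟩, rfl, fun _ => rfl⟩

theorem IsOmegaLimit.exists_mem_ladderRel (q : V) (hl : IsOmegaLimit l) :
    ∃ s ∈ ladderRel q, s 0 = l ∧ ∀ n, s (n + 1) = ladder l n :=
  ⟨fun n => n.casesOn l (ladder l), .inr (.inl ⟨hl, fun _ => rfl⟩), rfl, fun _ => rfl⟩

theorem strictMono_of_comp_mem_ladderRel (hinj : Injective F)
    (hF : ∀ s ∈ ladderRel q, F ∘ s ∈ ladderRel q') : StrictMono F := by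
  intro a b hab
  obtain ⟨s, hs, rfl, hsb⟩ := exists_mem_ladderRel_of_lt q hab
  rw [← hsb 0] at hab ⊢
  refine (lt_of_mem_ladderRel (hF s hs) (hinj.ne hab.ne) ?_).1
  exact congrArg F ((hsb 0).trans (hsb 1).symm)

theorem preservesLadders_of_comp_mem_ladderRel (hinj : Injective F)
    (hF : ∀ s ∈ ladderRel q, F ∘ s ∈ ladderRel q') : PreservesLadders F := by
  intro l hl
  obtain ⟨s, hs, rfl, hlad⟩ := hl.exists_mem_ladderRel q
  obtain ⟨hlim, hF'⟩ := isOmegaLimit_of_mem_ladderRel (hF s hs)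
    (hinj.ne (apply_one_lt_apply_two hl hlad).ne)
  exact ⟨hlim, fun n => by rw [← hlad]; exact hF' n⟩

theorem eq_of_comp_mem_ladderRel [WellFoundedLT V] [OrderTop V] (hinj : Injective F)
    (hF : ∀ s ∈ ladderRel q, F ∘ s ∈ ladderRel q') : q = q' := by
  have hid : F = id := (preservesLadders_of_comp_mem_ladderRel hinj hF).eq_id
    (strictMono_of_comp_mem_ladderRel hinj hF)
  have hconst : (fun _ => q) ∈ ladderRel q := .inr (.inr fun _ => rfl)
  have := eq_of_mem_ladderRel_of_apply_zero_eq (hF _ hconst) rfl 0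
  rwa [hid] at this

theorem mk_ladderRel_le [Infinite V] (q : V) : #(ladderRel q) ≤ #V := by
  have hinj : Injective fun s : ladderRel q => (s.1 0, s.1 1, s.1 2) := by
    rintro ⟨s, hs⟩ ⟨t, ht⟩ hst
    obtain ⟨h₀, h₁, h₂⟩ : s 0 = t 0 ∧ s 1 = t 1 ∧ s 2 = t 2 := by simpa using hst
    refine Subtype.ext (funext fun n => show s n = t n from ?_)
    by_cases h₀₁ : s 0 = s 1
    · rw [eq_of_mem_ladderRel_of_apply_zero_eq hs h₀₁,
        eq_of_mem_ladderRel_of_apply_zero_eq ht (by rwa [← h₀, ← h₁])]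
    obtain - | n := n
    · exact h₀
    by_cases h₁₂ : s 1 = s 2
    · rw [(lt_of_mem_ladderRel hs h₀₁ h₁₂).2,
        (lt_of_mem_ladderRel ht (by rwa [← h₀, ← h₁]) (by rwa [← h₁, ← h₂])).2, h₁]
    · rw [(isOmegaLimit_of_mem_ladderRel hs h₁₂).2,
        (isOmegaLimit_of_mem_ladderRel ht (by rwa [← h₁, ← h₂])).2, h₀]
  simpa using mk_le_of_injective hinj

theorem exists_mem_ladderRel_apply_eq [OrderTop V] [Nontrivial V] (q v : V) :
    ∃ s ∈ ladderRel q, ∃ n, s n = v := by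
  rcases eq_or_ne v ⊤ with rfl | hv
  · obtain ⟨w, hw⟩ := exists_ne (⊤ : V)
    obtain ⟨s, hs, -, hsn⟩ := exists_mem_ladderRel_of_lt q hw.lt_top
    exact ⟨s, hs, 1, hsn 0⟩
  · obtain ⟨s, hs, hs₀, -⟩ := exists_mem_ladderRel_of_lt q hv.lt_top
    exact ⟨s, hs, 0, hs₀⟩

end Ladder

/-! ### Bernstein-type sets -/

section Matching

variable {X : Type u} {κ : Cardinal.{u}}

/-- `A` is the graph of a fixed-point-free partial injection with at least `κ` elements. Such sets
are the ones from which pairs can be picked avoiding all earlier picks. -/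
structure IsLargeMatching (κ : Cardinal.{u}) (A : Set (X × X)) : Prop where
  le_mk : κ ≤ #A
  injOn_fst : InjOn Prod.fst A
  injOn_snd : InjOn Prod.snd A
  fst_ne_snd : ∀ p ∈ A, p.1 ≠ p.2

theorem isLargeMatching_graphOn {f : X → X} {W : Set X} (hW : κ ≤ #W) (hinj : InjOn f W)
    (hf : ∀ w ∈ W, f w ≠ w) : IsLargeMatching κ (W.graphOn f) where
  le_mk := by rwa [← mk_image_eq_of_injOn _ _ fst_injOn_graph, image_fst_graphOn]
  injOn_fst := fst_injOn_graph
  injOn_snd := by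
    rintro _ ⟨x, hx, rfl⟩ _ ⟨y, hy, rfl⟩ h
    rw [hinj hx hy h]
  fst_ne_snd := by
    rintro _ ⟨x, hx, rfl⟩
    exact (hf x hx).symm

theorem IsLargeMatching.exists_notMem {A : Set (X × X)} (hA : IsLargeMatching κ A) (hκ : ℵ₀ ≤ κ)
    {U : Set X} (hU : #U < κ) : ∃ p ∈ A, p.1 ∉ U ∧ p.2 ∉ U := by
  by_contra! h
  have hcover : A ⊆ (A ∩ Prod.fst ⁻¹' U) ∪ (A ∩ Prod.snd ⁻¹' U) := fun p hp =>
    (em (p.1 ∈ U)).imp (⟨hp, ·⟩) fun hpU => ⟨hp, h p hp hpU⟩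
  have hsmall {g : X × X → X} (hg : InjOn g A) : #(A ∩ g ⁻¹' U : Set (X × X)) < κ := by
    rw [← mk_image_eq_of_injOn _ _ (hg.mono inter_subset_left)]
    exact (mk_le_mk_of_subset (image_subset_iff.2 inter_subset_right)).trans_lt hU
  exact (hA.le_mk.trans ((mk_le_mk_of_subset hcover).trans (mk_union_le _ _))).not_gt
    (add_lt_of_lt hκ (hsmall hA.injOn_fst) (hsmall hA.injOn_snd))

theorem exists_transversal {T : Type u} (hκ : ℵ₀ ≤ κ) (hT : #T ≤ κ) {A : T → Set (X × X)}
    (hA : ∀ t, IsLargeMatching κ (A t)) :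
    ∃ s : T → X × X, (∀ t, s t ∈ A t) ∧ (Injective fun t => (s t).1) ∧
      ∀ t t', (s t).1 ≠ (s t').2 := by
  obtain ⟨r, wo, hr⟩ := exists_ord_eq T
  have hseg (t : T) : #{t' // r t' t} < κ := (card_typein_lt t hr).trans_le hT
  let used (t : T) (g : ∀ t', r t' t → X × X) : Set X :=
    (range fun x : {t' // r t' t} => (g x x.2).1) ∪ range fun x : {t' // r t' t} => (g x x.2).2
  have hused (t : T) (g : ∀ t', r t' t → X × X) : #(used t g) < κ :=
    (mk_union_le _ _).trans_lt
      (add_lt_of_lt hκ (mk_range_le.trans_lt (hseg t)) (mk_range_le.trans_lt (hseg t)))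
  choose pick hpickA hpick₁ hpick₂ using fun t g => (hA t).exists_notMem hκ (hused t g)
  let s : T → X × X := wo.wf.fix pick
  have hs (t : T) : s t = pick t fun t' _ => s t' := wo.wf.fix_eq pick t
  have hsA (t : T) : s t ∈ A t := hs t ▸ hpickA t _
  have hnew {t t' : T} (h : r t' t) :
      (s t).1 ≠ (s t').1 ∧ (s t).1 ≠ (s t').2 ∧ (s t).2 ≠ (s t').1 := by
    have hfst := hpick₁ t fun t' _ => s t'
    have hsnd := hpick₂ t fun t' _ => s t'
    rw [← hs t] at hfst hsnd
    exact ⟨fun he => hfst (.inl ⟨⟨t', h⟩, he.symm⟩), fun he => hfst (.inr ⟨⟨t', h⟩, he.symm⟩),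
      fun he => hsnd (.inl ⟨⟨t', h⟩, he.symm⟩)⟩
  refine ⟨s, hsA, fun t t' he => ?_, fun t t' => ?_⟩
  · rcases trichotomous_of r t t' with h | h | h
    exacts [absurd he.symm (hnew h).1, h, absurd he (hnew h).1]
  · rcases trichotomous_of r t t' with h | rfl | h
    exacts [(hnew h).2.2.symm, (hA t).fst_ne_snd _ (hsA t), (hnew h).2.1]

variable [TopologicalSpace X]

/-- A strengthening of the notion of a Bernstein set: every closed relation which contains a
fixed-point-free injection of size continuum leads out of `B` from continuum many points of `B`.
-/
def IsMatchingBernstein (B : Set X) : Prop :=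
  ∀ ⦃C : Set (X × X)⦄, IsClosed C → (∃ A ⊆ C, IsLargeMatching 𝔠 A) →
    𝔠 ≤ #{x ∈ B | ∃ y ∉ B, (x, y) ∈ C}

theorem mk_isClosed_le_continuum (X : Type u) [TopologicalSpace X] [SecondCountableTopology X] :
    #{C : Set X // IsClosed C} ≤ 𝔠 := by
  let basis := TopologicalSpace.countableBasis X
  have hbasis : #basis ≤ 𝔠 :=
    (mk_le_aleph0_iff.2 (TopologicalSpace.countable_countableBasis X)).trans aleph0_le_continuum
  refine le_trans (mk_subtype_mono fun C hC => ?_)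
    (MeasurableSpace.cardinal_measurableSet_le_continuum hbasis)
  borelize X
  rw [← (TopologicalSpace.isBasis_countableBasis X).borel_eq_generateFrom,
    ← BorelSpace.measurable_eq (α := X)]
  exact hC.measurableSet

theorem exists_isMatchingBernstein (X : Type u) [TopologicalSpace X]
    [SecondCountableTopology X] : ∃ B : Set X, IsMatchingBernstein B := by
  let Task := {C : Set (X × X) // IsClosed C ∧ ∃ A ⊆ C, IsLargeMatching 𝔠 A}
  let Copies : Type u := (𝔠 : Cardinal.{u}).out
  have hTask : #Task ≤ 𝔠 :=
    (mk_subtype_mono fun _ h => h.1).trans (mk_isClosed_le_continuum (X × X))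
  have hT : #(Task × Copies) ≤ 𝔠 := by
    rw [mk_prod, lift_id, lift_id, mk_out]
    exact (mul_le_mul_left hTask _).trans continuum_mul_self.le
  choose A hAC hA using fun C : Task => C.2.2
  obtain ⟨s, hsA, hinj, hdisj⟩ :=
    exists_transversal aleph0_le_continuum hT (fun t : Task × Copies => hA t.1)
  refine ⟨range fun t => (s t).1, fun C hC hCA => ?_⟩
  let t (c : Copies) : Task × Copies := (⟨C, hC, hCA⟩, c)
  rw [← mk_out 𝔠]
  refine mk_le_of_injective (f := fun c => ⟨(s (t c)).1, ⟨t c, rfl⟩, (s (t c)).2,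
    fun ⟨t', ht'⟩ => hdisj t' _ ht', hAC _ (hsA (t c))⟩) fun c d hcd => ?_
  exact congrArg Prod.snd (hinj (congrArg Subtype.val hcd))

end Matching

section Connected

/-- Every uncountable closed set meets `S` in at least continuum many points. -/
def MeetsUncountableClosed {X : Type*} [TopologicalSpace X] (S : Set X) : Prop :=
  ∀ ⦃F : Set X⦄, IsClosed F → ¬ F.Countable → 𝔠 ≤ #(S ∩ F : Set X)

theorem continuum_le_mk_of_isClosed {X : Type*} [TopologicalSpace X] [PolishSpace X] {F : Set X}
    (hF : IsClosed F) (hunc : ¬ F.Countable) : 𝔠 ≤ #F := by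
  obtain ⟨f, hf, -, hinj⟩ := hF.exists_nat_bool_injection_of_not_countable hunc
  have := lift_mk_le_lift_mk_of_injective ((injective_codRestrict fun x => hf ⟨x, rfl⟩).2 hinj)
  simpa using this

namespace MeetsUncountableClosed

theorem diff {X : Type*} [TopologicalSpace X] {S N : Set X} (hS : MeetsUncountableClosed S)
    (hN : N.Countable) : MeetsUncountableClosed (S \ N) := by
  intro F hF hunc
  rw [← inter_sdiff_right_comm]
  refine not_lt.1 fun hlt => ((hS hF hunc).trans (le_mk_sdiff_add_mk _ N)).not_gt ?_
  exact add_lt_of_lt aleph0_le_continuum hlt (hN.le_aleph0.trans_lt aleph0_lt_continuum)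

variable {E : Type*} [TopologicalSpace E] [AddCommGroup E] {S O : Set E}

theorem of_isMatchingBernstein [ContinuousAdd E] [PolishSpace E] [Nontrivial E]
    (hS : IsMatchingBernstein S) : MeetsUncountableClosed S := by
  intro F hF hunc
  obtain ⟨v, hv⟩ := exists_ne (0 : E)
  have hclosed : IsClosed (F.graphOn (· + v)) := by
    have : F.graphOn (· + v) = {p | p.1 ∈ F ∧ p.1 + v = p.2} := ext fun _ => mem_graphOn
    rw [this]
    exact (hF.preimage continuous_fst).inter (isClosed_eq (by fun_prop) continuous_snd)
  have hlarge : IsLargeMatching 𝔠 (F.graphOn (· + v)) :=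
    isLargeMatching_graphOn (continuum_le_mk_of_isClosed hF hunc)
      (add_left_injective v).injOn fun _ _ => by simpa using hv
  exact (hS hclosed ⟨_, subset_rfl, hlarge⟩).trans
    (mk_le_mk_of_subset fun x ⟨hx, _, _, hp⟩ => ⟨hx, (mem_graphOn.1 hp).1⟩)

theorem continuum_le_mk_inter_of_isOpen [Module ℝ E] [IsTopologicalAddGroup E]
    [ContinuousSMul ℝ E] [Nontrivial E] (hS : MeetsUncountableClosed S) (hO : IsOpen O)
    (hne : O.Nonempty) : 𝔠 ≤ #(S ∩ O : Set E) := by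
  obtain ⟨x, hx⟩ := hne
  obtain ⟨F, hFx, hF, hFO⟩ := exists_mem_nhds_isClosed_subset (hO.mem_nhds hx)
  have hunc : ¬ F.Countable := fun hc =>
    (interior_eq_empty_iff_dense_compl.2 (hc.dense_compl ℝ)).subset
      (mem_interior_iff_mem_nhds.2 hFx)
  exact (hS hF hunc).trans (mk_le_mk_of_subset (inter_subset_inter_right _ hFO))

theorem inter_nonempty_of_isOpen [Module ℝ E] [IsTopologicalAddGroup E] [ContinuousSMul ℝ E]
    [Nontrivial E] (hS : MeetsUncountableClosed S) (hO : IsOpen O) (hne : O.Nonempty) :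
    (S ∩ O).Nonempty :=
  mk_set_ne_zero_iff.1
    (aleph0_pos.trans_le (aleph0_le_continuum.trans
      (hS.continuum_le_mk_inter_of_isOpen hO hne))).ne'

theorem dense [Module ℝ E] [IsTopologicalAddGroup E] [ContinuousSMul ℝ E] [Nontrivial E]
    (hS : MeetsUncountableClosed S) : Dense S :=
  dense_iff_inter_open.2 fun O hO hne => inter_comm S O ▸ hS.inter_nonempty_of_isOpen hO hne

-- A separation of `S` would be one of the whole space minus a closed, hence countable, set.
theorem isPreconnected [Module ℝ E] [IsTopologicalAddGroup E] [ContinuousSMul ℝ E]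
    (hrank : 1 < Module.rank ℝ E) (hS : MeetsUncountableClosed S) : IsPreconnected S := by
  intro u v hu hv huv hSu hSv
  have : Nontrivial E := rank_pos_iff_nontrivial.1 (zero_lt_one.trans hrank)
  have hcount : (u ∪ v)ᶜ.Countable := by
    by_contra hunc
    have hempty : S ∩ (u ∪ v)ᶜ = ∅ := by rwa [← sdiff_eq, sdiff_eq_empty]
    have := hS (hu.union hv).isClosed_compl hunc
    rw [hempty, mk_eq_zero] at this
    exact continuum_pos.not_ge this
  have hconn := (hcount.isConnected_compl_of_one_lt_rank hrank).isPreconnected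
  rw [compl_compl] at hconn
  refine hS.inter_nonempty_of_isOpen (hu.inter hv) ?_
  exact (hconn u v hu hv subset_rfl (hSu.mono fun x hx => ⟨.inl hx.2, hx.2⟩)
    (hSv.mono fun x hx => ⟨.inr hx.2, hx.2⟩)).mono inter_subset_right

end MeetsUncountableClosed

end Connected

section Rigid

/-- Every continuous injection of a relatively open subset of `B` into `B` is an inclusion. -/
def LocallyRigid {X : Type*} [TopologicalSpace X] (B : Set X) : Prop :=
  ∀ ⦃O : Set X⦄, IsOpen O → ∀ ⦃f : X → X⦄, ContinuousOn f (B ∩ O) → InjOn f (B ∩ O) →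
    MapsTo f (B ∩ O) B → EqOn f id (B ∩ O)

theorem eq_of_mem_closure_graphOn {X Y : Type*} [TopologicalSpace X] [TopologicalSpace Y]
    [T2Space Y] {f : X → Y} {W : Set X} (hf : ContinuousOn f W) {x : X} {y : Y} (hx : x ∈ W)
    (hxy : (x, y) ∈ closure (W.graphOn f)) : f x = y := by
  have hsub : W.graphOn f ⊆ closure (W.graphOn f) ∩ Prod.fst ⁻¹' W :=
    subset_inter subset_closure fun p hp => (mem_graphOn.1 hp).1
  have heq : EqOn (f ∘ Prod.fst) Prod.snd (W.graphOn f) := fun p hp => (mem_graphOn.1 hp).2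
  exact heq.of_subset_closure (hf.comp continuousOn_fst fun p hp => hp.2) continuousOn_snd
    hsub inter_subset_left ⟨hxy, hx⟩

theorem IsMatchingBernstein.locallyRigid {X : Type*} [TopologicalSpace X] [T3Space X] {B : Set X}
    (hB : IsMatchingBernstein B)
    (hopen : ∀ ⦃O : Set X⦄, IsOpen O → O.Nonempty → 𝔠 ≤ #(B ∩ O : Set X)) : LocallyRigid B := by
  intro O hO f hf hinj hmaps z hz
  by_contra hfz
  obtain ⟨K, hzK, hK, hKO⟩ : ∃ K ∈ 𝓝 z, IsClosed K ∧ ∀ w ∈ B ∩ K, w ∈ O ∧ f w ≠ w := by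
    have hmoved : ∀ᶠ w in 𝓝[B ∩ O] z, f w ≠ w :=
      ((hf z hz).prodMk continuousWithinAt_id).eventually
        (isClosed_diagonal.isOpen_compl.mem_nhds hfz)
    have hnhds : ∀ᶠ w in 𝓝 z, w ∈ B → w ∈ O ∧ f w ≠ w := by
      filter_upwards [hO.mem_nhds hz.2, eventually_nhdsWithin_iff.1 hmoved] with w hwO hw hwB
      exact ⟨hwO, hw ⟨hwB, hwO⟩⟩
    obtain ⟨K, hzK, hK, hsub⟩ := exists_mem_nhds_isClosed_subset hnhds
    exact ⟨K, hzK, hK, fun w hw => hsub hw.2 hw.1⟩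
  have hKO' : B ∩ K ⊆ B ∩ O := fun w hw => ⟨hw.1, (hKO w hw).1⟩
  have hlarge : IsLargeMatching 𝔠 ((B ∩ K).graphOn f) :=
    isLargeMatching_graphOn
      ((hopen isOpen_interior ⟨z, mem_interior_iff_mem_nhds.2 hzK⟩).trans
        (mk_le_mk_of_subset (inter_subset_inter_right _ interior_subset)))
      (hinj.mono hKO') fun w hw => (hKO w hw).2
  obtain ⟨x, hxB, y, hyB, hxy⟩ := mk_set_ne_zero_iff.1 (continuum_pos.trans_le
    (hB isClosed_closure ⟨_, subset_closure, hlarge⟩)).ne'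
  have hxK : x ∈ K :=
    closure_minimal (fun p hp => (mem_graphOn.1 hp).1.2) (hK.preimage continuous_fst) hxy
  rw [← eq_of_mem_closure_graphOn (hf.mono hKO') ⟨hxB, hxK⟩ hxy] at hyB
  exact hyB (hmaps (hKO' ⟨hxB, hxK⟩))

theorem LocallyRigid.diff {X : Type*} [TopologicalSpace X] {B N : Set X} (hB : LocallyRigid B)
    (hN : IsClosed N) : LocallyRigid (B \ N) := by
  intro O hO f hf hinj hmaps
  have hset : B \ N ∩ O = B ∩ (O \ N) := by
    rw [← inter_sdiff_right_comm, inter_sdiff_assoc]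
  rw [hset] at hf hinj hmaps ⊢
  exact hB (hO.sdiff hN) hf hinj (hmaps.mono_right sdiff_subset)

/-- The properties of a plane set `B` that make it usable as the building block of the spaces
`Realization` below: the zeros of `sin (π z)`, i.e. the integers, are kept free as gluing ports,
and `B` is connected and rigid in a sense which survives removing countable sets and passing to
relatively open subsets, respectively. -/
structure IsRigidPiece (B : Set ℂ) : Prop where
  sin_ne_zero : ∀ b ∈ B, Complex.sin (Real.pi * b) ≠ 0
  meets : MeetsUncountableClosed B
  locallyRigid : LocallyRigid B

theorem IsRigidPiece.nontrivial {B : Set ℂ} (hB : IsRigidPiece B) : B.Nontrivial := by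
  obtain ⟨b, hb⟩ := hB.meets.dense.nonempty
  obtain ⟨c, hc, hcb⟩ := (hB.meets.diff (countable_singleton b)).dense.nonempty
  exact ⟨b, hb, c, hc, Ne.symm hcb⟩

theorem exists_isRigidPiece : ∃ B : Set ℂ, IsRigidPiece B := by
  obtain ⟨B, hB⟩ := exists_isMatchingBernstein ℂ
  let ports : Set ℂ := {z | Complex.sin (Real.pi * z) = 0}
  have hclosed : IsClosed ports := isClosed_eq (by fun_prop) continuous_const
  have hcount : ports.Countable := by
    refine (countable_range fun n : ℤ => (n : ℂ)).mono fun z hz => ?_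
    obtain ⟨n, hn⟩ := Complex.sin_eq_zero_iff.1 hz
    have hpi : (Real.pi : ℂ) ≠ 0 := Complex.ofReal_ne_zero.2 Real.pi_ne_zero
    exact ⟨n, mul_left_cancel₀ hpi (hn.trans (mul_comm _ _)).symm⟩
  have hmeets := MeetsUncountableClosed.of_isMatchingBernstein hB
  exact ⟨B \ ports, fun b hb => hb.2, hmeets.diff hcount,
    (hB.locallyRigid fun O => hmeets.continuum_le_mk_inter_of_isOpen).diff hclosed⟩

end Rigid

/-! ### Realizations of infinitary relations -/

theorem continuous_uniformFun_ofFun_single {ι E : Type*} [DecidableEq ι] [PseudoEMetricSpace E]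
    [Zero E] (i : ι) : Continuous fun x : E => UniformFun.ofFun (Pi.single i x : ι → E) := by
  refine LipschitzWith.continuous (K := 1) (UniformFun.lipschitzWith_ofFun_iff.2 fun j => ?_)
  obtain rfl | hj := eq_or_ne j i
  · simpa only [Pi.single_eq_same] using show LipschitzWith 1 fun x : E => x from .id
  · simpa only [Pi.single_eq_of_ne hj] using LipschitzWith.const' (0 : E)

theorem one_le_dist_intCast {m n : ℤ} (h : m ≠ n) : 1 ≤ dist (m : ℂ) n := by
  rw [Complex.dist_eq, ← Int.cast_sub, Complex.norm_intCast]
  exact_mod_cast Int.one_le_abs (sub_ne_zero.2 h)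

theorem countable_inter_preimage_of_isDiscrete {X Y : Type*} [TopologicalSpace X]
    [SecondCountableTopology X] [TopologicalSpace Y] {f : X → Y} {S : Set X} {T : Set Y}
    (hT : IsDiscrete T) (hf : ContinuousOn f S) (hinj : InjOn f S) : (S ∩ f ⁻¹' T).Countable := by
  have hdisc : IsDiscrete (S.domRestrict f ⁻¹' T) :=
    hT.preimage hf.domRestrict.continuousOn hinj.injective
  have hcount := (HereditarilyLindelofSpace.isLindelof _).countable_of_isDiscrete hdisc
  exact Subtype.image_preimage_coe S (f ⁻¹' T) ▸ hcount.image Subtype.val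

theorem subset_range_inl_of_isPreconnected {X Z : Type*} [TopologicalSpace X] [TopologicalSpace Z]
    [TotallyDisconnectedSpace Z] {T : Set (X ⊕ Z)} (hT : IsPreconnected T) (hnt : T.Nontrivial) :
    T ⊆ range Sum.inl := by
  rcases Sum.isPreconnected_iff.1 hT with ⟨t, -, rfl⟩ | ⟨t, ht, rfl⟩
  · exact image_subset_range _ _
  · exact absurd hnt (not_nontrivial_iff.2 (ht.subsingleton.image _))

/-- The realization of the relation `ρ` on `V`: a discrete set of vertices `V`, together with one
copy of `B` for every `e ∈ ρ`, which is glued at the port `n : ℂ` to the vertex `e n`. -/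
inductive Realization {V : Type u} (B : Set ℂ) (ρ : Set (ℕ → V)) : Type u
  | vertex (v : V) : Realization B ρ
  | point (e : ρ) (b : B) : Realization B ρ

namespace Realization

open scoped UniformConvergence

variable {V : Type u} {B : Set ℂ} {ρ : Set (ℕ → V)}

/-- The `v`-coordinate of the position `z` in a copy of `B` whose port `n` is glued to `s n`. It
equals `1` at the ports glued to `v` and `0` at the other ones; the point `-1` is only there to keep
the set nonempty, because the distance to the empty set is `0` by convention. -/
noncomputable def vertexWeight (s : ℕ → V) (z : ℂ) (v : V) : ℝ :=
  min 1 (Metric.infDist z (insert (-1) (Nat.cast '' {n | s n ≠ v})))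

open scoped Classical in
/-- The coordinates measuring the proximity to the vertices. -/
noncomputable def vertexCoord : Realization B ρ → V → ℝ
  | vertex v => Pi.single v 1
  | point e b => vertexWeight e b

open scoped Classical in
/-- The coordinates locating a point in the copies of `B`. Multiplying the pair `(1, b)` by
`sin (π b)` makes them vanish at the ports. -/
noncomputable def edgeCoord : Realization B ρ → ρ → ℂ × ℂ
  | vertex _ => 0
  | point e b => Pi.single e (Complex.sin (Real.pi * b), Complex.sin (Real.pi * b) * b)

/-- The family of all coordinates, with values in a product of spaces of functions with the topology
of uniform convergence. -/
noncomputable def coords (x : Realization B ρ) : (V →ᵤ ℝ) × (ρ →ᵤ ℂ × ℂ) :=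
  (UniformFun.ofFun (vertexCoord x), UniformFun.ofFun (edgeCoord x))

noncomputable instance : TopologicalSpace (Realization B ρ) :=
  TopologicalSpace.induced coords inferInstance

theorem isInducing_coords : IsInducing (coords : Realization B ρ → _) := ⟨rfl⟩

theorem continuous_vertexCoord (v : V) :
    Continuous fun x : Realization B ρ => vertexCoord x v :=
  ((UniformFun.lipschitzWith_eval v).continuous.comp continuous_fst).comp
    isInducing_coords.continuous

theorem continuous_edgeCoord (e : ρ) : Continuous fun x : Realization B ρ => edgeCoord x e :=
  ((UniformFun.lipschitzWith_eval e).continuous.comp continuous_snd).comp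
    isInducing_coords.continuous

open scoped Classical in
theorem vertexWeight_natCast (s : ℕ → V) (n : ℕ) : vertexWeight s n = Pi.single (s n) 1 := by
  funext v
  obtain rfl | hv := eq_or_ne v (s n)
  · rw [Pi.single_eq_same]
    refine min_eq_left ((Metric.le_infDist (insert_nonempty _ _)).2 ?_)
    rintro _ (rfl | ⟨m, hm, rfl⟩)
    · exact_mod_cast one_le_dist_intCast (m := n) (n := -1) (by omega)
    · exact_mod_cast one_le_dist_intCast (m := n) (n := m) (by rintro h; simp_all)
  · rw [Pi.single_eq_of_ne hv, vertexWeight,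
      Metric.infDist_zero_of_mem (.inr ⟨n, hv.symm, rfl⟩), min_eq_right zero_le_one]

theorem continuous_vertexWeight (s : ℕ → V) :
    Continuous fun z => UniformFun.ofFun (vertexWeight s z) :=
  LipschitzWith.continuous <| UniformFun.lipschitzWith_ofFun_iff.2 fun _ =>
    (Metric.lipschitz_infDist_pt _).const_min _

variable (B) in
open scoped Classical in
/-- The copy of `B` with index `e`, together with its ports, as a map on the plane. Only its values
on `ported B` matter. -/
noncomputable def arc (e : ρ) (z : ℂ) : Realization B ρ :=
  if h : z ∈ B then point e ⟨z, h⟩ else vertex (e.1 ⌊z.re⌋₊)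

/-- The set `B` together with the gluing ports. -/
def ported (B : Set ℂ) : Set ℂ := B ∪ range Nat.cast

theorem arc_of_mem (e : ρ) {z : ℂ} (hz : z ∈ B) : arc B e z = point e ⟨z, hz⟩ := dif_pos hz

theorem injOn_arc (e : ρ) : InjOn (arc B e) B := by
  intro z hz w hw h
  rw [arc_of_mem e hz, arc_of_mem e hw] at h
  injection h with _ h
  exact congrArg Subtype.val h

theorem arc_natCast (hB : IsRigidPiece B) (e : ρ) (n : ℕ) : arc B e n = vertex (e.1 n) := by
  have hn : (n : ℂ) ∉ B := fun h => hB.sin_ne_zero n h (by rw [mul_comm, Complex.sin_nat_mul_pi])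
  rw [arc, dif_neg hn, Complex.natCast_re, Nat.floor_natCast]

theorem continuousOn_arc (hB : IsRigidPiece B) (e : ρ) : ContinuousOn (arc B e) (ported B) := by
  classical
  let sine (z : ℂ) : ℂ := Complex.sin (Real.pi * z)
  have hcont : Continuous fun z => (UniformFun.ofFun (vertexWeight e.1 z),
      UniformFun.ofFun (Pi.single e (sine z, sine z * z) : ρ → ℂ × ℂ)) :=
    (continuous_vertexWeight e.1).prodMk
      ((continuous_uniformFun_ofFun_single e).comp (by fun_prop))
  refine isInducing_coords.continuousOn_iff.2 (hcont.continuousOn.congr ?_)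
  rintro z (hz | ⟨n, rfl⟩)
  · rw [comp_apply, arc_of_mem e hz]
    rfl
  · have hsine : sine n = 0 := by rw [← Complex.sin_nat_mul_pi n, mul_comm]
    simp only [comp_apply, arc_natCast hB, hsine, zero_mul, vertexWeight_natCast,
      Prod.mk_zero_zero, Pi.single_zero]
    rfl

/-- The coordinate in `B` on the copy of `B` with index `e`. Off this copy it has the junk value
`0 / 0 = 0`. -/
noncomputable def chart (e : ρ) (x : Realization B ρ) : ℂ := (edgeCoord x e).2 / (edgeCoord x e).1

theorem edgeCoord_point_self (e : ρ) (b : B) : edgeCoord (point e b) e =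
    (Complex.sin (Real.pi * b), Complex.sin (Real.pi * b) * b) := by
  classical exact Pi.single_eq_same e _

theorem chart_point (hB : IsRigidPiece B) (e : ρ) (b : B) : chart e (point e b) = b := by
  rw [chart, edgeCoord_point_self, mul_div_cancel_left₀ _ (hB.sin_ne_zero b b.2)]

theorem range_point_eq (hB : IsRigidPiece B) (e : ρ) :
    range (point e) = {x : Realization B ρ | (edgeCoord x e).1 ≠ 0} := by
  ext x
  constructor
  · rintro ⟨b, rfl⟩
    rw [mem_ofPred_eq, edgeCoord_point_self]
    exact hB.sin_ne_zero b b.2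
  · rcases x with v | ⟨e', b⟩
    · exact fun h => absurd rfl h
    · obtain rfl | hne := eq_or_ne e e'
      · exact fun _ => mem_range_self b
      · have hzero : edgeCoord (point e' b) e = 0 := by classical exact Pi.single_eq_of_ne hne _
        exact fun h => absurd (congrArg Prod.fst hzero) h

theorem isOpen_range_point (hB : IsRigidPiece B) (e : ρ) :
    IsOpen (range (point e : B → Realization B ρ)) := by
  rw [range_point_eq hB]
  exact isOpen_ne_fun (continuous_edgeCoord e).fst continuous_const

theorem continuousOn_chart (hB : IsRigidPiece B) (e : ρ) :
    ContinuousOn (chart e) (range (point e : B → Realization B ρ)) := by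
  rw [range_point_eq hB]
  exact (continuous_edgeCoord e).snd.continuousOn.div
    (continuous_edgeCoord e).fst.continuousOn fun _ hx => hx

theorem vertexCoord_vertex_ne_zero_iff {v w : V} :
    vertexCoord (vertex w : Realization B ρ) v ≠ 0 ↔ w = v := by
  classical
  rw [vertexCoord, Pi.single_apply, ite_ne_right_iff, and_iff_left one_ne_zero, eq_comm]

theorem injective_coords (hB : IsRigidPiece B) :
    Injective (coords : Realization B ρ → _) := by
  intro x y h
  have hvertex : vertexCoord x = vertexCoord y := congrArg Prod.fst h
  have hedge : edgeCoord x = edgeCoord y := congrArg Prod.snd h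
  have hcell (e : ρ) : x ∈ range (point e) ↔ y ∈ range (point e) := by
    rw [range_point_eq hB, mem_ofPred_eq, mem_ofPred_eq, hedge]
  rcases x with v | ⟨e, b⟩ <;> rcases y with w | ⟨e', b'⟩
  · have hne : vertexCoord (vertex v : Realization B ρ) v ≠ 0 :=
      vertexCoord_vertex_ne_zero_iff.2 rfl
    rw [hvertex, vertexCoord_vertex_ne_zero_iff] at hne
    rw [hne]
  · simpa using hcell e'
  · simpa using hcell e
  · obtain rfl : e = e' := by simpa using hcell e
    have hchart : chart e (point e b) = chart e (point e b') := by rw [chart, chart, hedge]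
    rw [chart_point hB, chart_point hB] at hchart
    rw [Subtype.ext hchart]

theorem metrizableSpace (hB : IsRigidPiece B) (ρ : Set (ℕ → V)) :
    TopologicalSpace.MetrizableSpace (Realization B ρ) :=
  have : TopologicalSpace.MetrizableSpace ((V →ᵤ ℝ) × (ρ →ᵤ ℂ × ℂ)) :=
    UniformSpace.metrizableSpace
  IsEmbedding.metrizableSpace ⟨isInducing_coords, injective_coords hB⟩

theorem isDiscrete_range_vertex : IsDiscrete (range (vertex : V → Realization B ρ)) := by
  refine isDiscrete_iff_forall_mem_exists_isOpen.2 (forall_mem_range.2 fun v => ?_)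
  refine ⟨{x | vertexCoord x v ≠ 0}, isOpen_ne_fun (continuous_vertexCoord v) continuous_const, ?_⟩
  ext x
  constructor
  · rintro ⟨hx, w, rfl⟩
    exact congrArg vertex (vertexCoord_vertex_ne_zero_iff.1 hx)
  · rintro rfl
    exact ⟨vertexCoord_vertex_ne_zero_iff.2 rfl, mem_range_self v⟩

theorem mk_eq (hV : 𝔠 ≤ #V) (hρ : #ρ ≤ #V) : #(Realization B ρ) = #V := by
  have hV₀ : ℵ₀ ≤ #V := aleph0_le_continuum.trans hV
  have hB : lift.{u} #B ≤ #V :=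
    (lift_le.2 ((mk_set_le B).trans mk_complex.le)).trans (lift_continuum.trans_le hV)
  refine le_antisymm ?_ (mk_le_of_injective (f := vertex) fun v w h => by injection h)
  have hsurj : Surjective
      (Sum.elim vertex fun p => point p.1 p.2 : V ⊕ ρ × B → Realization B ρ) := by
    rintro (v | ⟨e, b⟩)
    exacts [⟨.inl v, rfl⟩, ⟨.inr (e, b), rfl⟩]
  calc #(Realization B ρ) ≤ #(V ⊕ ρ × B) := mk_le_of_surjective hsurj
    _ = #V + #ρ * lift.{u} #B := by simp only [mk_sum, mk_prod, lift_id, lift_uzero]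
    _ ≤ #V + #V * #V := by gcongr
    _ = #V := by rw [mul_eq_self hV₀, add_eq_self hV₀]

variable {g : ℂ → Realization B ρ}

theorem isPreconnected_ported (hB : IsRigidPiece B) : IsPreconnected (ported B) :=
  (hB.meets.isPreconnected (by simp)).subset_closure subset_union_left
    fun z _ => hB.meets.dense z

theorem exists_subset_range_point (hB : IsRigidPiece B) {T : Set (Realization B ρ)}
    (hT : IsPreconnected T) (hne : T.Nonempty) (hdisj : Disjoint T (range vertex)) :
    ∃ e, T ⊆ range (point e) := by
  have hcover : ∀ x ∈ T, ∃ e, x ∈ range (point e) := by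
    rintro (v | ⟨e, b⟩) hx
    · exact absurd (mem_range_self v) (disjoint_left.1 hdisj hx)
    · exact ⟨e, mem_range_self b⟩
  obtain ⟨x, hx⟩ := hne
  obtain ⟨e, he⟩ := hcover x hx
  refine ⟨e, hT.subset_left_of_subset_union (v := ⋃ e' ≠ e, range (point e'))
    (isOpen_range_point hB e) (isOpen_biUnion fun e' _ => isOpen_range_point hB e') ?_ ?_
    ⟨x, hx, he⟩⟩
  · refine disjoint_iUnion₂_right.2 fun e' hne => disjoint_left.2 ?_
    rintro _ ⟨b, rfl⟩ ⟨b', h⟩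
    injection h with h _
    exact hne h
  · intro y hy
    obtain ⟨e', he'⟩ := hcover y hy
    obtain rfl | hne := eq_or_ne e' e
    exacts [.inl he', .inr (mem_biUnion hne he')]

theorem coe_eq_of_apply_eq_point (hB : IsRigidPiece B) (hg : ContinuousOn g B) (hinj : InjOn g B)
    {z : ℂ} (hz : z ∈ B) {e : ρ} {b : B} (hgz : g z = point e b) : (b : ℂ) = z := by
  obtain ⟨O, hO, hOeq⟩ := continuousOn_iff'.1 hg _ (isOpen_range_point hB e)
  have hmem : ∀ w ∈ B ∩ O, ∃ c : B, g w = point e c := by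
    intro w hw
    obtain ⟨c, hc⟩ := (hOeq.symm.subset hw.symm).1
    exact ⟨c, hc.symm⟩
  have hsub : B ∩ O ⊆ B := inter_subset_left
  have hid : EqOn (chart e ∘ g) id (B ∩ O) := by
    refine hB.locallyRigid hO ((continuousOn_chart hB e).comp (hg.mono hsub) ?_) ?_ ?_
    · intro w hw
      obtain ⟨c, hc⟩ := hmem w hw
      exact ⟨c, hc.symm⟩
    · intro w hw w' hw' h
      obtain ⟨c, hc⟩ := hmem w hw
      obtain ⟨c', hc'⟩ := hmem w' hw'
      rw [comp_apply, comp_apply, hc, hc', chart_point hB, chart_point hB] at h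
      exact hinj hw.1 hw'.1 (by rw [hc, hc', Subtype.ext h])
    · intro w hw
      obtain ⟨c, hc⟩ := hmem w hw
      rw [comp_apply, hc, chart_point hB]
      exact c.2
  have hzO : z ∈ B ∩ O := (hOeq.subset ⟨⟨b, hgz.symm⟩, hz⟩).symm
  rw [← chart_point hB e b, ← hgz]
  exact hid hzO

theorem exists_eqOn_arc (hB : IsRigidPiece B) (hg : ContinuousOn g (ported B)) (hinj : InjOn g B) :
    ∃ e : ρ, EqOn g (arc B e) (ported B) := by
  have : TopologicalSpace.MetrizableSpace (Realization B ρ) := metrizableSpace hB ρ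
  have hgB : ContinuousOn g B := hg.mono subset_union_left
  let N : Set ℂ := B ∩ g ⁻¹' range vertex
  have hmeets : MeetsUncountableClosed (B \ N) :=
    hB.meets.diff (countable_inter_preimage_of_isDiscrete isDiscrete_range_vertex hgB hinj)
  have hdisj : Disjoint (g '' (B \ N)) (range vertex) := by
    refine disjoint_left.2 ?_
    rintro _ ⟨z, hz, rfl⟩ hv
    exact hz.2 ⟨hz.1, hv⟩
  obtain ⟨e, he⟩ := exists_subset_range_point hB
    ((hmeets.isPreconnected (by simp)).image g (hgB.mono sdiff_subset))
    (hmeets.dense.nonempty.image g) hdisj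
  have heq : EqOn g (arc B e) (B \ N) := by
    intro z hz
    obtain ⟨b, hb⟩ := he (mem_image_of_mem g hz)
    obtain rfl := coe_eq_of_apply_eq_point hB hgB hinj hz.1 hb.symm
    rw [arc_of_mem e b.2, ← hb]
  exact ⟨e, heq.of_subset_closure hg (continuousOn_arc hB e)
    (sdiff_subset.trans subset_union_left) fun z _ => hmeets.dense z⟩

variable {V' : Type*} {ρ' : Set (ℕ → V')} {Z : Type*} [TopologicalSpace Z]
  [TotallyDisconnectedSpace Z]

theorem exists_apply_arc_eq_inl (hB : IsRigidPiece B) {f : Realization B ρ → Realization B ρ' ⊕ Z}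
    (hf : Continuous f) (hinj : Injective f) (e : ρ) :
    ∃ e' : ρ', ∀ z ∈ ported B, f (arc B e z) = Sum.inl (arc B e' z) := by
  have hcont : ContinuousOn (f ∘ arc B e) (ported B) := hf.comp_continuousOn (continuousOn_arc hB e)
  have hinjOn : InjOn (f ∘ arc B e) B := hinj.comp_injOn (injOn_arc e)
  have hnt : ((f ∘ arc B e) '' ported B).Nontrivial :=
    (hB.nontrivial.image_of_injOn hinjOn).mono (image_mono subset_union_left)
  have hinl : ∀ z ∈ ported B, ∃ x, Sum.inl x = f (arc B e z) := fun z hz =>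
    subset_range_inl_of_isPreconnected ((isPreconnected_ported hB).image _ hcont) hnt
      (mem_image_of_mem _ hz)
  obtain ⟨b, hb⟩ := hB.nontrivial.nonempty
  have : Nonempty (Realization B ρ') := ⟨(hinl b (.inl hb)).choose⟩
  choose! g hg using hinl
  obtain ⟨e', he'⟩ := exists_eqOn_arc hB (g := g)
    (IsEmbedding.inl.isInducing.continuousOn_iff.2 (hcont.congr hg)) fun z hz w hw h =>
      hinjOn hz hw (by rw [comp_apply, comp_apply, ← hg z (.inl hz), ← hg w (.inl hw), h])
  exact ⟨e', fun z hz => by rw [← hg z hz, he' hz]⟩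

theorem exists_injective_comp_mem (hB : IsRigidPiece B) (hρ : ∀ v, ∃ s ∈ ρ, ∃ n, s n = v)
    {f : Realization B ρ → Realization B ρ' ⊕ Z} (hf : Continuous f) (hinj : Injective f) :
    ∃ F : V → V', Injective F ∧ ∀ s ∈ ρ, F ∘ s ∈ ρ' := by
  have hports (e : ρ) : ∃ e' : ρ', ∀ n, f (vertex (e.1 n)) = Sum.inl (vertex (e'.1 n)) := by
    obtain ⟨e', he'⟩ := exists_apply_arc_eq_inl hB hf hinj e
    refine ⟨e', fun n => ?_⟩
    rw [← arc_natCast hB, ← arc_natCast hB, he' n (.inr (mem_range_self n))]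
  have hvertex (v : V) : ∃ w, f (vertex v) = Sum.inl (vertex w) := by
    obtain ⟨s, hs, n, rfl⟩ := hρ v
    obtain ⟨e', he'⟩ := hports ⟨s, hs⟩
    exact ⟨e'.1 n, he' n⟩
  choose F hF using hvertex
  refine ⟨F, fun v w h => ?_, fun s hs => ?_⟩
  · have heq : f (vertex v) = f (vertex w) := by rw [hF, hF, h]
    injection hinj heq
  · obtain ⟨e', he'⟩ := hports ⟨s, hs⟩
    have hFs : F ∘ s = e'.1 := by
      funext n
      have hn := (hF (s n)).symm.trans (he' n)
      injection Sum.inl_injective hn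
    exact hFs ▸ e'.2

theorem noInjCont_ladderRel [LinearOrder V] [WellFoundedLT V] [OrderTop V] [Nontrivial V]
    (hB : IsRigidPiece B) {q q' : V} (hne : q ≠ q') (Y : Type*) [TopologicalSpace Y]
    (Z : Type*) [TopologicalSpace Z] [TotallyDisconnectedSpace Z] :
    NoInjCont (Realization B (ladderRel q) ⊕ Y) (Realization B (ladderRel q') ⊕ Z) := by
  rintro ⟨f, hf, hinj⟩
  obtain ⟨F, hFinj, hF⟩ := exists_injective_comp_mem hB (exists_mem_ladderRel_apply_eq q)
    (hf.comp continuous_inl) (hinj.comp Sum.inl_injective)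
  exact hne (eq_of_comp_mem_ladderRel hFinj hF)

theorem not_isTotallyDisconnected_of_isClopen (hB : IsRigidPiece B)
    (hρ : ∀ v, ∃ s ∈ ρ, ∃ n, s n = v) {K : Set (Realization B ρ)} (hK : IsClopen K)
    (hne : K.Nonempty) : ¬ IsTotallyDisconnected K := by
  intro htd
  obtain ⟨x, hx⟩ := hne
  obtain ⟨e, hxe⟩ : ∃ e : ρ, x ∈ arc B e '' ported B := by
    rcases x with v | ⟨e, b⟩
    · obtain ⟨s, hs, n, rfl⟩ := hρ v
      exact ⟨⟨s, hs⟩, n, .inr (mem_range_self n), arc_natCast hB _ n⟩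
    · exact ⟨e, b, .inl b.2, arc_of_mem e b.2⟩
  have hconn : IsPreconnected (arc B e '' ported B) :=
    (isPreconnected_ported hB).image _ (continuousOn_arc hB e)
  have hsub : (arc B e '' ported B).Subsingleton :=
    htd _ (hconn.subset_isClopen hK ⟨x, hxe, hx⟩) hconn
  exact not_nontrivial_iff.2 (hsub.anti (image_mono subset_union_left))
    (hB.nontrivial.image_of_injOn (injOn_arc e))

end Realization

/-! ### Absorbing zero-dimensional summands -/

section Sum

variable {X W W' H A K : Type*} [TopologicalSpace X] [TopologicalSpace W] [TopologicalSpace W']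
  [TopologicalSpace H] [TopologicalSpace A] [TopologicalSpace K]

theorem metrizableSpace_sum [TopologicalSpace.MetrizableSpace X]
    [TopologicalSpace.MetrizableSpace W] : TopologicalSpace.MetrizableSpace (X ⊕ W) := by
  let := TopologicalSpace.metrizableSpaceMetric X
  let := TopologicalSpace.metrizableSpaceMetric W
  let : MetricSpace (X ⊕ W) := Metric.metricSpaceSum
  infer_instance

theorem HomeoToClopenSubset.exists_embedding (h : HomeoToClopenSubset A K) :
    ∃ i : A → K, IsOpenEmbedding i ∧ IsClosedEmbedding i := by
  obtain ⟨t, ht, ⟨φ⟩⟩ := h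
  exact ⟨fun a => φ a, ht.isOpen.isOpenEmbedding_subtypeVal.comp φ.isOpenEmbedding,
    ht.isClosed.isClosedEmbedding_subtypeVal.comp φ.isClosedEmbedding⟩

theorem exists_isOpenEmbedding_of_homeoToClopenSubset [CompactSpace A] [TotallyDisconnectedSpace A]
    (hX : ∀ S : Set X, IsClopen S → S.Nonempty → ¬ IsTotallyDisconnected S)
    (hH : ∀ S : Set H, IsCompact S → interior S = ∅)
    (h : HomeoToClopenSubset (W ⊕ (W' ⊕ A)) (X ⊕ (H ⊕ K))) : ∃ j : A → K, IsOpenEmbedding j := by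
  obtain ⟨i, hio, hic⟩ := h.exists_embedding
  let f : A → X ⊕ (H ⊕ K) := i ∘ Sum.inr ∘ Sum.inr
  have hfo : IsOpenEmbedding f := hio.comp (.comp .inr .inr)
  have hfc : IsClosedEmbedding f := hic.comp (.comp .inr .inr)
  have hX' : Sum.inl ⁻¹' range f = ∅ := by
    by_contra hne
    have htd : IsTotallyDisconnected (range f) :=
      hfo.isEmbedding.isTotallyDisconnected_range.2 inferInstance
    refine hX _ (IsClopen.preimage ⟨hfc.isClosed_range, hfo.isOpen_range⟩ continuous_inl)
      (nonempty_iff_ne_empty.2 hne) (isTotallyDisconnected_of_image continuous_inl.continuousOn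
        Sum.inl_injective fun T hT => htd T (hT.trans (image_preimage_subset _ _)))
  have hH' : (Sum.inr ∘ Sum.inl) ⁻¹' range f = ∅ := by
    have hemb : IsClosedEmbedding (Sum.inr ∘ Sum.inl : H → X ⊕ (H ⊕ K)) := .comp .inr .inl
    rw [← (hfo.isOpen_range.preimage hemb.continuous).interior_eq]
    exact hH _ (hemb.isCompact_preimage (isCompact_range hfo.continuous))
  have hf (a : A) : ∃ k, Sum.inr (Sum.inr k) = f a := by
    rcases ha : f a with x | y | k
    · exact (hX'.subset ⟨a, ha⟩).elim
    · exact (hH'.subset ⟨a, ha⟩).elim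
    · exact ⟨k, rfl⟩
  choose j hj using hf
  exact ⟨j, .of_comp _ (.comp .inr .inr) ((funext hj : Sum.inr ∘ Sum.inr ∘ j = f) ▸ hfo)⟩

theorem isClosedEmbedding_prodMkLeft [T1Space K] (k : K) :
    IsClosedEmbedding fun x : X => (x, k) := by
  refine ⟨isEmbedding_prodMkLeft k, ?_⟩
  have hrange : range (fun x : X => (x, k)) = Prod.snd ⁻¹' {k} := by
    ext ⟨x, l⟩
    simp [eq_comm]
  exact hrange ▸ isClosed_singleton.preimage continuous_snd

/-- A space which absorbs closed subsets of the Cantor space `ℕ → Bool`, placed at level `0` after a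
shift of the factor `ℕ`. The factor `ℚ` keeps its compact subsets nowhere dense. -/
abbrev Absorber : Type := ((ℕ → Bool) × ℕ) × ℚ

theorem interior_eq_empty_of_isCompact_absorber {S : Set Absorber} (hS : IsCompact S) :
    interior S = ∅ := by
  have himage := (isOpenMap_snd.image_interior_subset S).trans
    (Rat.interior_compact_eq_empty (hS.image continuous_snd)).subset
  exact image_eq_empty.1 (subset_empty_iff.1 himage)

theorem exists_isClosedEmbedding_absorber {j : A → ℕ → Bool} (hj : IsClosedEmbedding j) :
    ∃ i : Absorber ⊕ A → Absorber, IsClosedEmbedding i := by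
  have hsucc : IsClosedEmbedding Nat.succ :=
    .of_continuous_injective_isClosedMap continuous_of_discreteTopology Nat.succ_injective
      fun _ _ => isClosed_discrete _
  have hshift : IsClosedEmbedding (Prod.map (Prod.map id Nat.succ) id : Absorber → Absorber) :=
    (IsClosedEmbedding.id.prodMap hsucc).prodMap .id
  have hzero : IsClosedEmbedding fun a => (((j a, 0), 0) : Absorber) :=
    ((isClosedEmbedding_prodMkLeft 0).comp (isClosedEmbedding_prodMkLeft 0)).comp hj
  refine ⟨_, hshift.sumElim hzero (hshift.injective.sumElim hzero.injective fun x a h => ?_)⟩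
  exact Nat.succ_ne_zero x.1.2 (congrArg (fun y : Absorber => y.1.2) h)

theorem homeoToClosedSubset_absorber {j : A → ℕ → Bool} (hj : IsClosedEmbedding j) :
    HomeoToClosedSubset (X ⊕ (Absorber ⊕ A)) (X ⊕ (Absorber ⊕ K)) := by
  obtain ⟨i, hi⟩ := exists_isClosedEmbedding_absorber hj
  have hmap : IsClosedEmbedding
      (Sum.map id (Sum.inl ∘ i) : X ⊕ (Absorber ⊕ A) → X ⊕ (Absorber ⊕ K)) :=
    have hi' : IsClosedEmbedding (Sum.inl ∘ i : Absorber ⊕ A → Absorber ⊕ K) := .comp .inl hi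
    .of_continuous_injective_isClosedMap (continuous_id.sumMap hi'.continuous)
      (injective_id.sumMap hi'.injective) (IsClosedMap.id.sumMap hi'.isClosedMap)
  exact ⟨_, hmap.isClosed_range, ⟨hmap.isEmbedding.toHomeomorph⟩⟩

theorem not_isOpen_singleton_cantor (c : ℕ → Bool) : ¬ IsOpen ({c} : Set (ℕ → Bool)) := by
  intro hc
  have hlim : Filter.Tendsto (fun n => update c n (!c n)) Filter.atTop (𝓝 c) := by
    refine tendsto_pi_nhds.2 fun k => tendsto_const_nhds.congr' ?_
    filter_upwards [Filter.eventually_gt_atTop k] with n hn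
    rw [update_of_ne hn.ne]
  obtain ⟨n, hn⟩ := (hlim.eventually (hc.mem_nhds rfl)).exists
  simpa using congrFun hn n

theorem not_homeoToClopenSubset_unit
    (hX : ∀ S : Set X, IsClopen S → S.Nonempty → ¬ IsTotallyDisconnected S) :
    ¬ HomeoToClopenSubset (W ⊕ (W' ⊕ Unit)) (X ⊕ (Absorber ⊕ (ℕ → Bool))) := by
  intro h
  obtain ⟨j, hj⟩ := exists_isOpenEmbedding_of_homeoToClopenSubset hX
    (fun _ => interior_eq_empty_of_isCompact_absorber) h
  exact not_isOpen_singleton_cantor (j ()) (range_unique (f := j) ▸ hj.isOpen_range)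

theorem not_homeoToClopenSubset_cantor
    (hX : ∀ S : Set X, IsClopen S → S.Nonempty → ¬ IsTotallyDisconnected S) :
    ¬ HomeoToClopenSubset (W ⊕ (W' ⊕ (ℕ → Bool))) (X ⊕ (Absorber ⊕ Unit)) := by
  intro h
  obtain ⟨j, hj⟩ := exists_isOpenEmbedding_of_homeoToClopenSubset hX
    (fun _ => interior_eq_empty_of_isCompact_absorber) h
  exact not_subsingleton (ℕ → Bool) hj.injective.subsingleton

theorem mk_sum_eq_of_mk_le_continuum {X : Type u} {Z : Type} (hX : 𝔠 ≤ #X) (hZ : #Z ≤ 𝔠) :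
    #(X ⊕ Z) = #X := by
  rw [mk_sum, lift_uzero]
  exact add_eq_left (aleph0_le_continuum.trans hX)
    ((lift_le.2 hZ).trans (lift_continuum.trans_le hX))

end Sum

theorem stmt9Pair_absorber {X : Type u} [TopologicalSpace X] [TopologicalSpace.MetrizableSpace X]
    (hcard : 𝔠 ≤ #X) (hX : ∀ S : Set X, IsClopen S → S.Nonempty → ¬ IsTotallyDisconnected S) :
    Stmt9Pair #X (X ⊕ (Absorber ⊕ Unit)) (X ⊕ (Absorber ⊕ (ℕ → Bool))) := by
  have := metrizableSpace_sum (X := Absorber) (W := Unit)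
  have := metrizableSpace_sum (X := Absorber) (W := ℕ → Bool)
  have hunit : IsClosedEmbedding fun (_ : Unit) (_ : ℕ) => false :=
    .of_continuous_injective_isClosedMap continuous_const (injective_of_subsingleton _)
      fun s _ => (s.toFinite.image _).isClosed
  refine ⟨metrizableSpace_sum, metrizableSpace_sum, mk_sum_eq_of_mk_le_continuum hcard ?_,
    mk_sum_eq_of_mk_le_continuum hcard ?_, homeoToClosedSubset_absorber hunit,
    homeoToClosedSubset_absorber .id, not_homeoToClopenSubset_unit hX,
    not_homeoToClopenSubset_cantor hX⟩
  · simpa using (add_one_eq aleph0_le_continuum).le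
  · simp

theorem statement9 (α : Cardinal.{u}) (hα : Cardinal.continuum ≤ α)
    (Q : Type u) (hQ : #Q = α) :
    ∃ (D E : Q → Type u) (tD : ∀ q, TopologicalSpace (D q))
      (tE : ∀ q, TopologicalSpace (E q)),
      (∀ q, @Stmt9Pair α (D q) (E q) (tD q) (tE q)) ∧
      (∀ q q', q ≠ q' →
        @NoInjCont (D q) (tD q) (D q') (tD q') ∧
        @NoInjCont (D q) (tD q) (E q') (tE q') ∧
        @NoInjCont (E q) (tE q) (D q') (tD q') ∧
        @NoInjCont (E q) (tE q) (E q') (tE q')) := by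
  obtain ⟨B, hB⟩ := exists_isRigidPiece
  obtain ⟨_, _, -⟩ := exists_ord_eq_type_lt Q
  have hQ₀ : ℵ₀ ≤ #Q := hQ ▸ aleph0_le_continuum.trans hα
  have hV : #(WithTop Q) = α := (mk_option.trans (add_one_eq hQ₀)).trans hQ
  have : Infinite (WithTop Q) := infinite_iff.2 (hV ▸ aleph0_le_continuum.trans hα)
  let X (q : Q) : Type u := Realization B (ladderRel (q : WithTop Q))
  have hX (q : Q) : #(X q) = α :=
    (Realization.mk_eq (hV ▸ hα) (mk_ladderRel_le (q : WithTop Q))).trans hV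
  refine ⟨fun q => X q ⊕ (Absorber ⊕ Unit), fun q => X q ⊕ (Absorber ⊕ (ℕ → Bool)),
    fun q => inferInstance, fun q => inferInstance, fun q => ?_, fun q q' hne => ?_⟩
  · have := Realization.metrizableSpace hB (ladderRel (q : WithTop Q))
    rw [← hX q]
    exact stmt9Pair_absorber (hα.trans_eq (hX q).symm) fun S =>
      Realization.not_isTotallyDisconnected_of_isClopen hB (exists_mem_ladderRel_apply_eq _)
  · have hne' : (q : WithTop Q) ≠ q' := WithTop.coe_injective.ne hne
    exact ⟨Realization.noInjCont_ladderRel hB hne' _ _, Realization.noInjCont_ladderRel hB hne' _ _,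
      Realization.noInjCont_ladderRel hB hne' _ _, Realization.noInjCont_ladderRel hB hne' _ _⟩
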